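/- arXiv:1112.3148 — 3 statements merged into one kernel-verified Lean document; each statement's English description precedes it below -/
import Mathlib

section
/- Suppose (i) there exist a constant c > 0 and a finite measure μ on E such that c⁻¹·μ(A) ≤ κ_1(x)(A) ≤ c·μ(A) for every x ∈ E and every measurable set A ⊆ E; (ii) for every T > 0 one has sup{ κ_t(x)(E) : x ∈ E, 0 ≤ t ≤ T } < ∞; and (iii) there exists a point x₀ ∈ E with ∑_{n=0}^∞ κ_n(x₀)(E) < ∞. Then there exist constants K > 0 and β > 0 such that κ_t(x)(E) ≤ K·e^{−βt} for all x ∈ E and all t ≥ 0. -/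
open MeasureTheory Set
open scoped ENNReal

open ProbabilityTheory

/-!
The total masses `m t = sup_x κ_t(x)(E)` are submultiplicative in `t`, so they decay exponentially
as soon as they are bounded on `[0, T)` and `m T < 1` for a single time `T > 0`. Comparability of
`κ_1` with a fixed measure is a Harnack inequality `κ_1(x) ≤ c² κ_1(x₀)`; composing with `κ_{T-1}`
propagates it to all times `T ≥ 1`, so `m T` is controlled by the mass at the single point `x₀`,
which tends to zero along the integers by summability.
-/

section Submultiplicative

theorem le_pow_mul_of_submultiplicative {A R : Type*} [AddCommMonoid A] [PartialOrder A]
    [IsOrderedAddMonoid A] [Monoid R] [Preorder R] [MulLeftMono R] {m : A → R}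
    (hm : ∀ s t, 0 ≤ s → 0 ≤ t → m (s + t) ≤ m s * m t) {T s : A} (hT : 0 ≤ T) (hs : 0 ≤ s)
    (n : ℕ) : m (n • T + s) ≤ m T ^ n * m s := by
  induction n with
  | zero => simp only [zero_nsmul, zero_add, pow_zero, one_mul, le_refl]
  | succ n ih =>
    calc m ((n + 1) • T + s) = m (T + (n • T + s)) := by rw [succ_nsmul', add_assoc]
      _ ≤ m T * m (n • T + s) := hm _ _ hT (add_nonneg (nsmul_nonneg hT n) hs)
      _ ≤ m T * (m T ^ n * m s) := mul_le_mul_right ih _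
      _ = m T ^ (n + 1) * m s := by rw [pow_succ', mul_assoc]

theorem pow_floor_div_le_inv_mul_exp {q : ℝ} (hq₀ : 0 < q) (hq₁ : q ≤ 1) (t T : ℝ) :
    q ^ ⌊t / T⌋₊ ≤ q⁻¹ * Real.exp (-(-Real.log q / T) * t) := by
  calc q ^ ⌊t / T⌋₊ = q ^ (⌊t / T⌋₊ : ℝ) := (Real.rpow_natCast _ _).symm
    _ ≤ q ^ (t / T - 1) :=
      Real.rpow_le_rpow_of_exponent_ge hq₀ hq₁ (Nat.sub_one_lt_floor _).le
    _ = q⁻¹ * Real.exp (Real.log q * (t / T)) := by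
      rw [Real.rpow_sub_one hq₀.ne', Real.rpow_def_of_pos hq₀, div_eq_inv_mul]
    _ = q⁻¹ * Real.exp (-(-Real.log q / T) * t) := by ring_nf

theorem exists_exp_decay_of_submultiplicative {m : ℝ → ℝ≥0∞}
    (hm : ∀ s t, 0 ≤ s → 0 ≤ t → m (s + t) ≤ m s * m t) {T : ℝ} (hT : 0 < T) (hmT : m T < 1)
    {M : ℝ≥0∞} (hM : M ≠ ⊤) (hbdd : ∀ t ∈ Ico 0 T, m t ≤ M) :
    ∃ K β : ℝ, 0 < K ∧ 0 < β ∧ ∀ t, 0 ≤ t → m t ≤ ENNReal.ofReal (K * Real.exp (-β * t)) := by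
  -- Enlarging `m T` to some `q > 0` keeps `log q` meaningful when `m T = 0`.
  obtain ⟨q, hmq, hq₁⟩ : ∃ q : ℝ, m T < ENNReal.ofReal q ∧ q < 1 := by
    obtain ⟨q, -, hmq, hq₁⟩ := ENNReal.lt_iff_exists_real_btwn.mp hmT
    exact ⟨q, hmq, ENNReal.ofReal_lt_one.mp hq₁⟩
  have hq₀ : 0 < q := ENNReal.ofReal_pos.mp (pos_of_gt hmq)
  refine ⟨q⁻¹ * (M.toReal + 1), -Real.log q / T, by positivity,
    div_pos (neg_pos.mpr (Real.log_neg hq₀ hq₁)) hT, fun t ht => ?_⟩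
  have hfloor : ⌊t / T⌋₊ • T ≤ t := by
    rw [nsmul_eq_mul]
    exact (le_div_iff₀ hT).mp (Nat.floor_le (div_nonneg ht hT.le))
  have hlt : t < ⌊t / T⌋₊ • T + T := by
    rw [nsmul_eq_mul, ← add_one_mul]
    exact (div_lt_iff₀ hT).mp (Nat.lt_floor_add_one _)
  have hrem : t - ⌊t / T⌋₊ • T ∈ Ico 0 T := ⟨sub_nonneg.mpr hfloor, sub_lt_iff_lt_add'.mpr hlt⟩
  calc m t = m (⌊t / T⌋₊ • T + (t - ⌊t / T⌋₊ • T)) := by rw [add_sub_cancel]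
    _ ≤ m T ^ ⌊t / T⌋₊ * m (t - ⌊t / T⌋₊ • T) :=
      le_pow_mul_of_submultiplicative hm hT.le hrem.1 _
    _ ≤ ENNReal.ofReal q ^ ⌊t / T⌋₊ * M := by gcongr; exact hbdd _ hrem
    _ = ENNReal.ofReal (q ^ ⌊t / T⌋₊ * M.toReal) := by
      rw [ENNReal.ofReal_mul (by positivity), ENNReal.ofReal_pow hq₀.le, ENNReal.ofReal_toReal hM]
    _ ≤ ENNReal.ofReal (q⁻¹ * Real.exp (-(-Real.log q / T) * t) * (M.toReal + 1)) := by
      gcongr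
      · exact pow_floor_div_le_inv_mul_exp hq₀ hq₁.le t T
      · exact le_add_of_nonneg_right zero_le_one
    _ = ENNReal.ofReal (q⁻¹ * (M.toReal + 1) * Real.exp (-(-Real.log q / T) * t)) := by
      rw [mul_right_comm]

end Submultiplicative

theorem eventually_cofinite_mul_lt_of_tsum_ne_top {ι : Type*} {a : ι → ℝ≥0∞}
    (ha : ∑' i, a i ≠ ⊤) {C ε : ℝ≥0∞} (hC : C ≠ ⊤) (hε : 0 < ε) :
    ∀ᶠ i in Filter.cofinite, C * a i < ε := by
  have hlim : Filter.Tendsto (fun i => C * a i) Filter.cofinite (nhds (C * 0)) :=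
    ENNReal.Tendsto.const_mul (ENNReal.tendsto_cofinite_zero_of_tsum_ne_top ha) (Or.inr hC)
  exact hlim.eventually_lt_const (by rwa [mul_zero])

theorem le_mul_self_smul_of_inv_smul_le {E : Type*} [MeasurableSpace E] {c : ℝ≥0∞} (hc₀ : c ≠ 0)
    (hc : c ≠ ⊤) {μ ν ρ : Measure E} (hν : c⁻¹ • μ ≤ ν) (hρ : ρ ≤ c • μ) : ρ ≤ (c * c) • ν := by
  calc ρ ≤ c • μ := hρ
    _ = (c * c) • c⁻¹ • μ := by rw [smul_smul, mul_assoc, ENNReal.mul_inv_cancel hc₀ hc, mul_one]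
    _ ≤ (c * c) • ν := by gcongr

section Kernel

variable {α β γ : Type*} [MeasurableSpace α] [MeasurableSpace β] [MeasurableSpace γ]

theorem kernel_bound_comp_le (η : Kernel β γ) (κ : Kernel α β) :
    (η ∘ₖ κ).bound ≤ η.bound * κ.bound := by
  refine iSup_le fun x => ?_
  calc (η ∘ₖ κ) x univ ≤ κ x univ * η.bound := Kernel.comp_apply_univ_le κ η x
    _ ≤ κ.bound * η.bound := by gcongr; exact κ.measure_le_bound x univ
    _ = η.bound * κ.bound := mul_comm _ _

theorem kernel_bound_comp_le_of_le_smul (η : Kernel β γ) {κ : Kernel α β} {C : ℝ≥0∞} {x₀ : α}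
    (hκ : ∀ x, κ x ≤ C • κ x₀) : (η ∘ₖ κ).bound ≤ C * (η ∘ₖ κ) x₀ univ := by
  refine iSup_le fun x => ?_
  rw [Kernel.comp_apply' _ _ _ .univ, Kernel.comp_apply' _ _ _ .univ]
  calc ∫⁻ y, η y univ ∂κ x ≤ ∫⁻ y, η y univ ∂(C • κ x₀) := lintegral_mono' (hκ x) le_rfl
    _ = C * ∫⁻ y, η y univ ∂κ x₀ := lintegral_smul_measure _ _

end Kernel

section KernelSemigroup

variable {E : Type*} [MeasurableSpace E] {κ : ℝ → Kernel E E}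

/-- The Chapman–Kolmogorov equations for a family of kernels in continuous time. Time is real so
that subtraction is available; the kernels at negative times are arbitrary, and `κ 0` need not be
the identity kernel. -/
def IsKernelSemigroup (κ : ℝ → Kernel E E) : Prop :=
  ∀ s t : ℝ, 0 ≤ s → 0 ≤ t → κ (s + t) = κ s ∘ₖ κ t

theorem IsKernelSemigroup.bound_add_le (hκ : IsKernelSemigroup κ) (s t : ℝ) (hs : 0 ≤ s)
    (ht : 0 ≤ t) : (κ (s + t)).bound ≤ (κ s).bound * (κ t).bound := by
  rw [hκ s t hs ht]
  exact kernel_bound_comp_le (κ s) (κ t)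

theorem IsKernelSemigroup.bound_le_of_le_smul (hκ : IsKernelSemigroup κ) {r t : ℝ} (hr : 0 ≤ r)
    (hrt : r ≤ t) {C : ℝ≥0∞} {x₀ : E} (hdom : ∀ x, κ r x ≤ C • κ r x₀) :
    (κ t).bound ≤ C * κ t x₀ univ := by
  rw [← sub_add_cancel t r, hκ (t - r) r (sub_nonneg.mpr hrt) hr]
  exact kernel_bound_comp_le_of_le_smul (κ (t - r)) hdom

theorem exp_decay_of_comparable_and_summable_general (hκ : IsKernelSemigroup κ)
    {r T : ℝ} (hr : 0 ≤ r) (hrT : r ≤ T) (hT : 0 < T)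
    {C : ℝ≥0∞} {x₀ : E} (hdom : ∀ x, κ r x ≤ C • κ r x₀) (hsmall : C * κ T x₀ univ < 1)
    {M : ℝ≥0∞} (hM : M ≠ ⊤) (hbdd : ∀ x, ∀ t ∈ Ico 0 T, κ t x univ ≤ M) :
    ∃ K β : ℝ, 0 < K ∧ 0 < β ∧
      ∀ x t, 0 ≤ t → κ t x univ ≤ ENNReal.ofReal (K * Real.exp (-β * t)) := by
  obtain ⟨K, β, hK, hβ, hdecay⟩ := exists_exp_decay_of_submultiplicative
    (m := fun t => (κ t).bound) hκ.bound_add_le hT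
    ((hκ.bound_le_of_le_smul hr hrT hdom).trans_lt hsmall) hM
    fun t ht => iSup_le fun x => hbdd x t ht
  exact ⟨K, β, hK, hβ, fun x t ht => ((κ t).measure_le_bound x univ).trans (hdecay t ht)⟩

end KernelSemigroup

/-- If a measurable semigroup of finite kernels `κ_t` on `E` satisfies:
(i) `κ_1` is two-sided comparable to a fixed finite measure `μ`,
(ii) the total masses `κ_t(x)(E)` are bounded on bounded time intervals, and
(iii) `∑_{n=0}^∞ κ_n(x₀)(E) < ∞` for some point `x₀`,
then the total mass decays exponentially, uniformly in `x`. -/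
theorem exp_decay_of_comparable_and_summable
    {E : Type*} [MeasurableSpace E]
    (κ : ℝ → E → Measure E)
    (hfin : ∀ t : ℝ, 0 ≤ t → ∀ x, IsFiniteMeasure (κ t x))
    (hmeas : ∀ A : Set E, MeasurableSet A →
      Measurable (fun p : ℝ × E => κ p.1 p.2 A))
    (hsemi : ∀ s t : ℝ, 0 ≤ s → 0 ≤ t → ∀ x, ∀ A : Set E, MeasurableSet A →
      κ (s + t) x A = ∫⁻ y, κ s y A ∂(κ t x))
    -- (i) two-sided comparability of `κ_1` with a fixed finite measure
    (hi : ∃ (c : ℝ≥0∞) (μ : Measure E), 0 < c ∧ c ≠ ⊤ ∧ IsFiniteMeasure μ ∧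
      ∀ x : E, ∀ A : Set E, MeasurableSet A →
        c⁻¹ * μ A ≤ κ 1 x A ∧ κ 1 x A ≤ c * μ A)
    -- (ii) boundedness of total mass on bounded time intervals
    (hii : ∀ T : ℝ, 0 < T → ∃ M : ℝ≥0∞, M ≠ ⊤ ∧
      ∀ x : E, ∀ t : ℝ, 0 ≤ t → t ≤ T → κ t x univ ≤ M)
    -- (iii) summability of the total masses at integer times at some point
    (hiii : ∃ x₀ : E, (∑' n : ℕ, κ (n : ℝ) x₀ univ) ≠ ⊤) :
    ∃ (K β : ℝ), 0 < K ∧ 0 < β ∧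
      ∀ x : E, ∀ t : ℝ, 0 ≤ t →
        (κ t x univ).toReal ≤ K * Real.exp (-β * t) := by
  obtain ⟨c, μ, hc₀, hc, -, hcμ⟩ := hi
  obtain ⟨x₀, hx₀⟩ := hiii
  let κ' (t : ℝ) : Kernel E E := ⟨κ t, Measure.measurable_of_measurable_coe _ fun A hA =>
    (hmeas A hA).comp measurable_prodMk_left⟩
  have hκ' : IsKernelSemigroup κ' := fun s t hs ht => Kernel.ext fun x => Measure.ext fun A hA =>
    (hsemi s t hs ht x A hA).trans (Kernel.comp_apply' (κ' s) (κ' t) x hA).symm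
  have hdom (x : E) : κ' 1 x ≤ (c * c) • κ' 1 x₀ :=
    le_mul_self_smul_of_inv_smul_le hc₀.ne' hc (Measure.le_iff.mpr fun A hA => (hcμ x₀ A hA).1)
      (Measure.le_iff.mpr fun A hA => (hcμ x A hA).2)
  obtain ⟨n, hsmall, hn⟩ := ((eventually_cofinite_mul_lt_of_tsum_ne_top hx₀
    (ENNReal.mul_ne_top hc hc) one_pos).and (Filter.eventually_cofinite_ne 0)).exists
  have hn₁ : (1 : ℝ) ≤ n := Nat.one_le_cast.mpr (Nat.one_le_iff_ne_zero.mpr hn)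
  have hn₀ : (0 : ℝ) < n := one_pos.trans_le hn₁
  obtain ⟨M, hM, hbdd⟩ := hii n hn₀
  obtain ⟨K, β, hK, hβ, hdecay⟩ := exp_decay_of_comparable_and_summable_general hκ' zero_le_one
    hn₁ hn₀ hdom hsmall hM fun x t ht => hbdd x t ht.1 ht.2.le
  exact ⟨K, β, hK, hβ, fun x t ht =>
    ENNReal.toReal_le_of_le_ofReal (by positivity) (hdecay x t ht)⟩
end

section
/- Let (Ω, 𝓕, (𝓕_s)_{s≥0}, P) be a filtered probability space and let 0 ≤ t₀ < T < ∞. Let h : [0,T] × Ω → ℝ be progressively measurable with ∫_{t₀}^T |h_r| dr < ∞ almost surely, and let g : [0,T] × Ω → ℝ be an adapted process whose paths are almost surely continuous on [t₀, T], such that E[ (sup_{t₀ ≤ s ≤ T} |g_s|) · exp(∫_{t₀}^T |h_r| dr) ] < ∞. Suppose that for every s ∈ [t₀, T], g_s = E[ g_T − ∫_s^T h_r g_r dr | 𝓕_s ] almost surely. Then for every s ∈ [t₀, T], g_s = E[ g_T · exp(−∫_s^T h_r dr) | 𝓕_s ] almost surely. -/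
open MeasureTheory Set
open scoped MeasureTheory

/-!
Fix `s` and put `D r = exp (-∫_s^r h)` and `Φ r = g T - ∫_r^T h g`, so that `Φ' = h g` and
`(D Φ)' = -h D (Φ - g)` almost everywhere. Integrating over `[s, T]`,
`g T * exp (-∫_s^T h) = Φ s - ∫_s^T h D (Φ - g)`. By assumption `E[Φ r - g r | ℱ r] = 0`, and
`h r * D r` is `ℱ r`-measurable, so `E[h r D r (Φ r - g r) | ℱ s] = 0` by the tower property; by
Fubini the last integral has zero conditional expectation, and `E[Φ s | ℱ s] = g s` is what
remains. For Fubini, if `|g| ≤ S` and `A = ∫_s^T |h|`, then `∫_s^T |h D (Φ - g)| ≤ 3 S exp A`.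
-/

open Filter Function Topology

section AbsolutelyContinuous

variable {F F' : ℝ → ℝ} {a b : ℝ}

lemma absolutelyContinuousOnInterval_comp_of_lipschitzOnWith
    {X Y : Type*} [PseudoMetricSpace X] [PseudoMetricSpace Y] {φ : X → Y} {f : ℝ → X} {t : Set X}
    {K : NNReal} (hφ : LipschitzOnWith K φ t) (hf : AbsolutelyContinuousOnInterval f a b)
    (hft : MapsTo f (uIcc a b) t) : AbsolutelyContinuousOnInterval (φ ∘ f) a b := by
  refine squeeze_zero' (Eventually.of_forall fun E => Finset.sum_nonneg fun _ _ => dist_nonneg) ?_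
    (by simpa only [mul_zero] using Tendsto.const_mul (K : ℝ) hf)
  filter_upwards [inter_mem_inf univ_mem (mem_principal_self _)] with E hE
  rw [Finset.mul_sum]
  refine Finset.sum_le_sum fun i hi => ?_
  obtain ⟨hl, hr⟩ := hE.2.1 i hi
  exact hφ.dist_le_mul _ (hft hl) _ (hft hr)

lemma absolutelyContinuousOnInterval_exp_comp (hF : AbsolutelyContinuousOnInterval F a b) :
    AbsolutelyContinuousOnInterval (Real.exp ∘ F) a b := by
  obtain ⟨C, hC⟩ := hF.exists_bound
  obtain ⟨K, hK⟩ : ∃ K, LipschitzOnWith K Real.exp (Icc (-C) C) :=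
    (Real.contDiff_exp.contDiffOn (n := 1)).exists_lipschitzOnWith (by simp) (convex_Icc _ _)
      isCompact_Icc
  refine absolutelyContinuousOnInterval_comp_of_lipschitzOnWith hK hF fun r hr => ?_
  rw [mem_Icc, ← abs_le, ← Real.norm_eq_abs]
  exact hC r hr

lemma intervalIntegrable_of_ae_hasDerivAt (hF : AbsolutelyContinuousOnInterval F a b)
    (hF' : ∀ᵐ r, r ∈ uIcc a b → HasDerivAt F (F' r) r) : IntervalIntegrable F' volume a b := by
  refine hF.intervalIntegrable_deriv.congr_ae ((ae_restrict_iff' measurableSet_uIoc).2 ?_)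
  filter_upwards [hF'] with r hr hrab using (hr (uIoc_subset_uIcc hrab)).deriv

lemma integral_eq_sub_of_ae_hasDerivAt (hF : AbsolutelyContinuousOnInterval F a b)
    (hF' : ∀ᵐ r, r ∈ uIcc a b → HasDerivAt F (F' r) r) : ∫ r in a..b, F' r = F b - F a := by
  rw [← hF.integral_deriv_eq_sub]
  refine intervalIntegral.integral_congr_ae ?_
  filter_upwards [hF'] with r hr hrab using (hr (uIoc_subset_uIcc hrab)).deriv.symm

end AbsolutelyContinuous

section IntegratingFactor

variable {f k : ℝ → ℝ} {a b : ℝ}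

lemma absolutelyContinuousOnInterval_exp_integral_mul (hf : IntervalIntegrable f volume a b)
    (hk : IntervalIntegrable k volume a b) (c : ℝ) :
    AbsolutelyContinuousOnInterval
      (fun r => Real.exp (∫ u in a..r, f u) * (c + ∫ u in r..b, k u)) a b := by
  have hexp := absolutelyContinuousOnInterval_exp_comp
    (hf.absolutelyContinuousOnInterval_intervalIntegral left_mem_uIcc)
  have hconst : AbsolutelyContinuousOnInterval (fun _ => c) a b :=
    (LipschitzWith.const c).lipschitzOnWith.absolutelyContinuousOnInterval
  have htail := (hk.absolutelyContinuousOnInterval_intervalIntegral right_mem_uIcc).neg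
  simpa only [intervalIntegral.integral_symm b] using! hexp.mul (hconst.add htail)

lemma ae_hasDerivAt_exp_integral_mul (hf : IntervalIntegrable f volume a b)
    (hk : IntervalIntegrable k volume a b) (c : ℝ) :
    ∀ᵐ r, r ∈ uIcc a b →
      HasDerivAt (fun r => Real.exp (∫ u in a..r, f u) * (c + ∫ u in r..b, k u))
        (Real.exp (∫ u in a..r, f u) * (f r * (c + ∫ u in r..b, k u) - k r)) r := by
  filter_upwards [hf.ae_hasDerivAt_integral, hk.ae_hasDerivAt_integral] with r hfr hkr hr
  have htail : HasDerivAt (fun r => ∫ u in r..b, k u) (-k r) r := by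
    simpa only [intervalIntegral.integral_symm b] using! (hkr hr b right_mem_uIcc).neg
  exact ((hfr hr a left_mem_uIcc).exp.mul (htail.const_add c)).congr_deriv (by ring)

lemma intervalIntegrable_exp_integral_mul_sub (hf : IntervalIntegrable f volume a b)
    (hk : IntervalIntegrable k volume a b) (c : ℝ) :
    IntervalIntegrable
      (fun r => Real.exp (∫ u in a..r, f u) * (f r * (c + ∫ u in r..b, k u) - k r))
      volume a b :=
  intervalIntegrable_of_ae_hasDerivAt (absolutelyContinuousOnInterval_exp_integral_mul hf hk c)
    (ae_hasDerivAt_exp_integral_mul hf hk c)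

lemma integral_exp_integral_mul_sub (hf : IntervalIntegrable f volume a b)
    (hk : IntervalIntegrable k volume a b) (c : ℝ) :
    ∫ r in a..b, Real.exp (∫ u in a..r, f u) * (f r * (c + ∫ u in r..b, k u) - k r) =
      c * Real.exp (∫ u in a..b, f u) - (c + ∫ u in a..b, k u) := by
  rw [integral_eq_sub_of_ae_hasDerivAt (absolutelyContinuousOnInterval_exp_integral_mul hf hk c)
    (ae_hasDerivAt_exp_integral_mul hf hk c)]
  simp only [intervalIntegral.integral_same, Real.exp_zero]
  ring

end IntegratingFactor

/-- The integrand `f r · exp(-∫_a^r f) · ((g b - ∫_r^b f g) - g r)`: the amount by which `g` misses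
the linear equation `g r = g b - ∫_r^b f g`, weighted by the derivative of the integrating
factor. -/
noncomputable def weightedDefect (f g : ℝ → ℝ) (a b r : ℝ) : ℝ :=
  f r * Real.exp (-∫ u in a..r, f u) * (g b - (∫ u in r..b, f u * g u) - g r)

section WeightedDefect

variable {f g : ℝ → ℝ} {a b r S : ℝ}

lemma weightedDefect_eq_neg_exp_integral_mul_sub (f g : ℝ → ℝ) (a b r : ℝ) :
    weightedDefect f g a b r = -(Real.exp (∫ u in a..r, -f u) *
      (-f r * (g b + ∫ u in r..b, -(f u * g u)) - -(f r * g r))) := by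
  simp only [weightedDefect, intervalIntegral.integral_neg]
  ring

lemma intervalIntegrable_weightedDefect (hf : IntervalIntegrable f volume a b)
    (hfg : IntervalIntegrable (fun u => f u * g u) volume a b) :
    IntervalIntegrable (weightedDefect f g a b) volume a b :=
  (intervalIntegrable_exp_integral_mul_sub hf.neg hfg.neg (g b)).neg.congr
    fun r _ => (weightedDefect_eq_neg_exp_integral_mul_sub f g a b r).symm

lemma integral_weightedDefect (hf : IntervalIntegrable f volume a b)
    (hfg : IntervalIntegrable (fun u => f u * g u) volume a b) :
    ∫ r in a..b, weightedDefect f g a b r =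
      (g b - ∫ u in a..b, f u * g u) - g b * Real.exp (-∫ u in a..b, f u) := by
  simp only [weightedDefect_eq_neg_exp_integral_mul_sub, intervalIntegral.integral_neg]
  have key := integral_exp_integral_mul_sub hf.neg hfg.neg (g b)
  simp only [Pi.neg_apply, intervalIntegral.integral_neg] at key
  rw [key]
  ring

lemma abs_integral_mul_le (hab : a ≤ b) (hf : IntervalIntegrable f volume a b)
    (hg : ∀ u ∈ Icc a b, |g u| ≤ S) : |∫ u in a..b, f u * g u| ≤ S * ∫ u in a..b, |f u| := by
  rw [← intervalIntegral.integral_const_mul, ← Real.norm_eq_abs]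
  refine intervalIntegral.norm_integral_le_of_norm_le hab (Eventually.of_forall fun u hu => ?_)
    (hf.abs.const_mul S)
  rw [norm_mul, mul_comm]
  exact mul_le_mul_of_nonneg_right (hg u (Ioc_subset_Icc_self hu)) (norm_nonneg _)

-- With `c = 3` the bounding function is an instance of the integrand of
-- `integral_exp_integral_mul_sub`, so that its integral is explicit.
lemma abs_weightedDefect_le (hf : IntervalIntegrable f volume a b) (hr : r ∈ Icc a b)
    (hg : ∀ u ∈ Icc a b, |g u| ≤ S) :
    |weightedDefect f g a b r| ≤
      S * (Real.exp (∫ u in a..r, |f u|) * (|f r| * (3 + ∫ u in r..b, |f u|) - |f r|)) := by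
  have hexp : -∫ u in a..r, f u ≤ ∫ u in a..r, |f u| :=
    (neg_le_abs _).trans (intervalIntegral.abs_integral_le_integral_abs hr.1)
  have hfrb : IntervalIntegrable f volume r b :=
    hf.mono_set (uIcc_subset_uIcc (Icc_subset_uIcc hr) right_mem_uIcc)
  have hdefect : |g b - (∫ u in r..b, f u * g u) - g r| ≤ S * (2 + ∫ u in r..b, |f u|) := by
    have htail := abs_integral_mul_le hr.2 hfrb fun u hu => hg u ⟨hr.1.trans hu.1, hu.2⟩
    have hgb := hg b ⟨hr.1.trans hr.2, le_rfl⟩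
    linarith [hg r hr, abs_sub (g b - ∫ u in r..b, f u * g u) (g r),
      abs_sub (g b) (∫ u in r..b, f u * g u)]
  calc |weightedDefect f g a b r|
      = |f r| * Real.exp (-∫ u in a..r, f u) * |g b - (∫ u in r..b, f u * g u) - g r| := by
        rw [weightedDefect, abs_mul, abs_mul, Real.abs_exp]
    _ ≤ |f r| * Real.exp (∫ u in a..r, |f u|) * (S * (2 + ∫ u in r..b, |f u|)) := by gcongr
    _ = _ := by ring

lemma integral_abs_weightedDefect_le (hab : a ≤ b) (hf : IntervalIntegrable f volume a b)
    (hfg : IntervalIntegrable (fun u => f u * g u) volume a b)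
    (hg : ∀ u ∈ Icc a b, |g u| ≤ S) :
    ∫ r in a..b, |weightedDefect f g a b r| ≤ 3 * (S * Real.exp (∫ u in a..b, |f u|)) := by
  have hS : 0 ≤ S := (abs_nonneg _).trans (hg b (right_mem_Icc.2 hab))
  have hA : 0 ≤ ∫ u in a..b, |f u| :=
    intervalIntegral.integral_nonneg hab fun _ _ => abs_nonneg _
  calc ∫ r in a..b, |weightedDefect f g a b r|
      ≤ ∫ r in a..b, S *
          (Real.exp (∫ u in a..r, |f u|) * (|f r| * (3 + ∫ u in r..b, |f u|) - |f r|)) :=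
        intervalIntegral.integral_mono_on hab (intervalIntegrable_weightedDefect hf hfg).abs
          ((intervalIntegrable_exp_integral_mul_sub hf.abs hf.abs 3).const_mul S)
          fun r hr => abs_weightedDefect_le hf hr hg
    _ = S * (3 * Real.exp (∫ u in a..b, |f u|) - (3 + ∫ u in a..b, |f u|)) := by
        rw [intervalIntegral.integral_const_mul, integral_exp_integral_mul_sub hf.abs hf.abs]
    _ ≤ 3 * (S * Real.exp (∫ u in a..b, |f u|)) := by nlinarith

end WeightedDefect

section ConditionalExpectation

variable {Ω : Type*} {m m₁ m₂ m0 : MeasurableSpace Ω} {μ : Measure Ω}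

lemma condExp_sub_ae_eq_zero {E : Type*} [NormedAddCommGroup E] [NormedSpace ℝ E] [CompleteSpace E]
    {f g : Ω → E} (hm : m ≤ m0) [SigmaFinite (μ.trim hm)] (hf : Integrable f μ)
    (hg : g =ᵐ[μ] μ[f | m]) : μ[f - g | m] =ᵐ[μ] 0 := by
  calc μ[f - g | m]
      =ᵐ[μ] μ[f | m] - μ[g | m] := condExp_sub hf (integrable_condExp.congr hg.symm) m
    _ =ᵐ[μ] μ[f | m] - μ[f | m] :=
        EventuallyEq.rfl.sub ((condExp_congr_ae hg).trans (condExp_condExp_of_le le_rfl hm))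
    _ =ᵐ[μ] 0 := by rw [sub_self]

lemma condExp_mul_sub_ae_eq_zero {D f g : Ω → ℝ} (hm₁₂ : m₁ ≤ m₂) (hm₂ : m₂ ≤ m0)
    [SigmaFinite (μ.trim hm₂)] (hD : StronglyMeasurable[m₂] D) (hf : Integrable f μ)
    (hg : g =ᵐ[μ] μ[f | m₂]) (hDfg : Integrable (D * (f - g)) μ) :
    μ[D * (f - g) | m₁] =ᵐ[μ] 0 := by
  have hfg : Integrable (f - g) μ := hf.sub (integrable_condExp.congr hg.symm)
  have hzero : μ[D * (f - g) | m₂] =ᵐ[μ] 0 := by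
    filter_upwards [condExp_mul_of_stronglyMeasurable_left hD hDfg hfg,
      condExp_sub_ae_eq_zero hm₂ hf hg] with ω hpull hfg
    rw [hpull, Pi.mul_apply, hfg, Pi.zero_apply, mul_zero]
  calc μ[D * (f - g) | m₁]
      =ᵐ[μ] μ[μ[D * (f - g) | m₂] | m₁] := (condExp_condExp_of_le hm₁₂ hm₂).symm
    _ =ᵐ[μ] μ[(0 : Ω → ℝ) | m₁] := condExp_congr_ae hzero
    _ =ᵐ[μ] 0 := by rw [condExp_zero]

lemma condExp_integral_ae_eq_zero {α E : Type*} [MeasurableSpace α] [NormedAddCommGroup E]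
    [NormedSpace ℝ E] [CompleteSpace E] {ν : Measure α} [SFinite ν] {F : α → Ω → E} (hm : m ≤ m0)
    [SigmaFinite (μ.trim hm)] (hF : Integrable (uncurry F) (ν.prod μ))
    (hzero : ∀ᵐ r ∂ν, μ[F r | m] =ᵐ[μ] 0) : μ[fun ω => ∫ r, F r ω ∂ν | m] =ᵐ[μ] 0 := by
  have : SigmaFinite μ := .of_trim hm
  refine (ae_eq_condExp_of_forall_setIntegral_eq hm hF.integral_prod_right
    (fun _ _ _ => integrableOn_zero) (fun B hB _ => ?_)
    stronglyMeasurable_zero.aestronglyMeasurable).symm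
  have hFB : Integrable (uncurry F) (ν.prod (μ.restrict B)) := by
    rw [← ν.restrict_univ, Measure.prod_restrict]
    exact hF.restrict
  have hsection : ∀ᵐ r ∂ν, ∫ ω in B, F r ω ∂μ = 0 := by
    filter_upwards [hF.prod_right_ae, hzero] with r hFr hr
    rw [← setIntegral_condExp (f := F r) hm hFr hB, integral_congr_ae (ae_restrict_of_ae hr)]
    exact integral_zero _ _
  calc ∫ ω in B, (0 : Ω → E) ω ∂μ
      = ∫ r, ∫ ω in B, F r ω ∂μ ∂ν := by
        rw [integral_eq_zero_of_ae hsection]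
        exact integral_zero _ _
    _ = ∫ ω in B, ∫ r, F r ω ∂ν ∂μ := integral_integral_swap hFB

end ConditionalExpectation

section ProgressiveMeasurability

variable {Ω E : Type*} {m0 : MeasurableSpace Ω} [TopologicalSpace E]

lemma stronglyMeasurable_uncurry_min_of_isStronglyProgressive {ι : Type*} [LinearOrder ι]
    [TopologicalSpace ι] [OrderClosedTopology ι] [SecondCountableTopology ι] [MeasurableSpace ι]
    [OpensMeasurableSpace ι] {ℱ : Filtration ι m0} {u : ι → Ω → E}
    (hu : IsStronglyProgressive ℱ u) (i : ι) :
    StronglyMeasurable[Prod.instMeasurableSpace (m₂ := ℱ i)]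
      (uncurry fun j ω => u (min j i) ω) := by
  let _ : MeasurableSpace Ω := ℱ i
  have hmin : Measurable fun p : ι × Ω => ((⟨min p.1 i, min_le_right _ _⟩ : Iic i), p.2) :=
    (measurable_fst.min measurable_const).subtype_mk.prodMk measurable_snd
  exact (hu i).comp_measurable hmin

lemma stronglyMeasurable_uncurry_of_isStronglyProgressive {ι : Type*} [LinearOrder ι] [Nonempty ι]
    [IsCountablyGenerated (atTop : Filter ι)] [TopologicalSpace ι] [OrderClosedTopology ι]
    [SecondCountableTopology ι] [MeasurableSpace ι] [OpensMeasurableSpace ι]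
    [TopologicalSpace.PseudoMetrizableSpace E] {ℱ : Filtration ι m0} {u : ι → Ω → E}
    (hu : IsStronglyProgressive ℱ u) :
    StronglyMeasurable (uncurry u) := by
  refine stronglyMeasurable_of_tendsto atTop (f := fun i => uncurry fun j ω => u (min j i) ω)
    (fun i => (stronglyMeasurable_uncurry_min_of_isStronglyProgressive hu i).mono
      (sup_le_sup_left (MeasurableSpace.comap_mono (ℱ.le i)) _)) ?_
  refine tendsto_pi_nhds.2 fun p => tendsto_const_nhds.congr' ?_
  filter_upwards [eventually_ge_atTop p.1] with i hi
  simp only [uncurry, min_eq_left hi]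

lemma stronglyMeasurable_intervalIntegral_of_isStronglyProgressive {F : Type*}
    [NormedAddCommGroup F] [NormedSpace ℝ F] {ℱ : Filtration ℝ m0} {u : ℝ → Ω → F}
    (hu : IsStronglyProgressive ℱ u) {a b : ℝ} (hab : a ≤ b) :
    StronglyMeasurable[ℱ b] fun ω => ∫ r in a..b, u r ω := by
  let _ : MeasurableSpace Ω := ℱ b
  convert! (stronglyMeasurable_uncurry_min_of_isStronglyProgressive hu b).integral_prod_left'
    (μ := volume.restrict (Ioc a b)) using 2 with ω
  rw [intervalIntegral.integral_of_le hab]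
  exact setIntegral_congr_fun measurableSet_Ioc fun r hr => by
    simp only [uncurry, min_eq_left hr.2]

end ProgressiveMeasurability

section JointMeasurability

variable {Ω E : Type*} {m0 : MeasurableSpace Ω} {μ : Measure Ω} [NormedAddCommGroup E]

lemma aestronglyMeasurable_setIntegral_section {α : Type*} [MeasurableSpace α] {ν : Measure α}
    [SFinite ν] [SFinite μ] [NormedSpace ℝ E] {K : α → Ω → E}
    (hK : AEStronglyMeasurable (uncurry K) (ν.prod μ)) {A : Set (α × α)} (hA : MeasurableSet A) :
    AEStronglyMeasurable (fun p : α × Ω => ∫ u in {u | (p.1, u) ∈ A}, K u p.2 ∂ν) (ν.prod μ) := by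
  have hA' : MeasurableSet {q : (α × Ω) × α | (q.1.1, q.2) ∈ A} :=
    ((measurable_fst.comp measurable_fst).prodMk measurable_snd) hA
  have hK' := hK.prod_swap.comp_snd.comp_measurePreserving (measurePreserving_prodAssoc ν μ ν)
  convert! (hK'.indicator hA').integral_prod_right' using 2 with p
  exact (integral_indicator (measurable_prodMk_left hA)).symm

variable [NormedSpace ℝ E] [SFinite μ] {K : ℝ → Ω → E} {a b : ℝ}

lemma aestronglyMeasurable_intervalIntegral_const_fst
    (hK : AEStronglyMeasurable (uncurry K) ((volume.restrict (Ioc a b)).prod μ)) :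
    AEStronglyMeasurable (fun p : ℝ × Ω => ∫ u in a..p.1, K u p.2)
      ((volume.restrict (Ioc a b)).prod μ) := by
  refine (aestronglyMeasurable_setIntegral_section hK
    (measurableSet_le measurable_snd measurable_fst)).congr ?_
  filter_upwards [Measure.quasiMeasurePreserving_fst.ae (ae_restrict_mem measurableSet_Ioc)]
    with p hp
  change ∫ u in Iic p.1, K u p.2 ∂volume.restrict (Ioc a b) = _
  rw [intervalIntegral.integral_of_le hp.1.le, Measure.restrict_restrict measurableSet_Iic]
  congr 2
  ext u
  exact ⟨fun hu => ⟨hu.2.1, hu.1⟩, fun hu => ⟨hu.2, hu.1, hu.2.trans hp.2⟩⟩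

lemma aestronglyMeasurable_intervalIntegral_fst_const
    (hK : AEStronglyMeasurable (uncurry K) ((volume.restrict (Ioc a b)).prod μ)) :
    AEStronglyMeasurable (fun p : ℝ × Ω => ∫ u in p.1..b, K u p.2)
      ((volume.restrict (Ioc a b)).prod μ) := by
  refine (aestronglyMeasurable_setIntegral_section hK
    (measurableSet_lt measurable_fst measurable_snd)).congr ?_
  filter_upwards [Measure.quasiMeasurePreserving_fst.ae (ae_restrict_mem measurableSet_Ioc)]
    with p hp
  change ∫ u in Ioi p.1, K u p.2 ∂volume.restrict (Ioc a b) = _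
  rw [intervalIntegral.integral_of_le hp.2, Measure.restrict_restrict measurableSet_Ioi]
  congr 2
  ext u
  exact ⟨fun hu => ⟨hu.1, hu.2.2⟩, fun hu => ⟨hu.1, hp.1.trans hu.1, hu.2⟩⟩

lemma aestronglyMeasurable_intervalIntegral (hab : a ≤ b)
    (hK : AEStronglyMeasurable (uncurry K) ((volume.restrict (Ioc a b)).prod μ)) :
    AEStronglyMeasurable (fun ω => ∫ u in a..b, K u ω) μ := by
  simp only [intervalIntegral.integral_of_le hab]
  exact hK.prod_swap.integral_prod_right'

end JointMeasurability

lemma aestronglyMeasurable_uncurry_of_ae_continuousOn {Ω E : Type*} {m0 : MeasurableSpace Ω}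
    {μ : Measure Ω} [TopologicalSpace E] [TopologicalSpace.PseudoMetrizableSpace E]
    [Zero E] {a b : ℝ} {g : ℝ → Ω → E} (hab : a ≤ b) (hg : ∀ r, StronglyMeasurable (g r))
    (hcont : ∀ᵐ ω ∂μ, ContinuousOn (fun r => g r ω) (Icc a b)) :
    AEStronglyMeasurable (uncurry g) ((volume.restrict (Icc a b)).prod μ) := by
  obtain ⟨A, hAμ, hAm, hA⟩ := hcont.exists_measurable_mem
  let G : ℝ → Ω → E := fun r => A.indicator (g (projIcc a b hab r))
  have hGcont : ∀ ω, Continuous fun r => G r ω := by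
    intro ω
    by_cases hω : ω ∈ A
    · simp only [G, indicator_of_mem hω]
      exact (continuousOn_iff_continuous_domRestrict.1 (hA ω hω)).comp continuous_projIcc
    · simp only [G, indicator_of_notMem hω]
      exact continuous_const
  have hG : StronglyMeasurable (uncurry G) :=
    stronglyMeasurable_uncurry_of_continuous_of_stronglyMeasurable hGcont
      fun r => (hg _).indicator hAm
  refine hG.aestronglyMeasurable.congr ?_
  filter_upwards [Measure.quasiMeasurePreserving_fst.ae (ae_restrict_mem measurableSet_Icc),
    Measure.quasiMeasurePreserving_snd.ae hAμ] with p hr hω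
  simp only [uncurry, G, indicator_of_mem hω, projIcc_of_mem hab hr]

section DefectProcess

variable {Ω : Type*} {m0 : MeasurableSpace Ω} {μ : Measure Ω} {h g : ℝ → Ω → ℝ} {W : Ω → ℝ}
  {s r T : ℝ}

lemma aestronglyMeasurable_weightedDefect [SFinite μ]
    (hh : AEStronglyMeasurable (uncurry h) ((volume.restrict (Ioc s T)).prod μ))
    (hg : AEStronglyMeasurable (uncurry g) ((volume.restrict (Ioc s T)).prod μ))
    (hgT : AEStronglyMeasurable (g T) μ) :
    AEStronglyMeasurable (uncurry fun r ω => weightedDefect (h · ω) (g · ω) s T r)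
      ((volume.restrict (Ioc s T)).prod μ) := by
  have hhg : AEStronglyMeasurable (uncurry fun r ω => h r ω * g r ω)
      ((volume.restrict (Ioc s T)).prod μ) := hh.mul hg
  have hexp : AEStronglyMeasurable (fun p : ℝ × Ω => Real.exp (-∫ u in s..p.1, h u p.2))
      ((volume.restrict (Ioc s T)).prod μ) :=
    Real.continuous_exp.comp_aestronglyMeasurable
      (aestronglyMeasurable_intervalIntegral_const_fst hh).neg
  exact (hh.mul hexp).mul
    ((hgT.comp_snd.sub (aestronglyMeasurable_intervalIntegral_fst_const hhg)).sub hg)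

lemma ae_intervalIntegrable_mul [SFinite μ] (hsT : s ≤ T)
    (hg : AEStronglyMeasurable (uncurry g) ((volume.restrict (Ioc s T)).prod μ))
    (hint : ∀ᵐ ω ∂μ, IntervalIntegrable (h · ω) volume s T)
    (hbdd : ∀ᵐ ω ∂μ, ∃ C, ∀ r ∈ Icc s T, |g r ω| ≤ C) :
    ∀ᵐ ω ∂μ, IntervalIntegrable (fun r => h r ω * g r ω) volume s T := by
  filter_upwards [hg.prodMk_right, hint, hbdd] with ω hgω hhω ⟨C, hC⟩
  rw [intervalIntegrable_iff_integrableOn_Ioc_of_le hsT] at hhω ⊢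
  refine hhω.mul_bdd (c := C) hgω ?_
  filter_upwards [ae_restrict_mem measurableSet_Ioc] with r hr using hC r (Ioc_subset_Icc_self hr)

lemma ae_abs_le_div_exp
    (hgW : ∀ᵐ ω ∂μ, ∀ r ∈ Icc s T, |g r ω| * Real.exp (∫ u in s..T, |h u ω|) ≤ W ω) :
    ∀ᵐ ω ∂μ, ∀ r ∈ Icc s T, |g r ω| ≤ W ω / Real.exp (∫ u in s..T, |h u ω|) :=
  hgW.mono fun _ hω r hr => (le_div_iff₀ (Real.exp_pos _)).2 (hω r hr)

lemma integrable_weightedDefect [SFinite μ] (hsT : s ≤ T)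
    (hh : AEStronglyMeasurable (uncurry h) ((volume.restrict (Ioc s T)).prod μ))
    (hg : AEStronglyMeasurable (uncurry g) ((volume.restrict (Ioc s T)).prod μ))
    (hgT : AEStronglyMeasurable (g T) μ)
    (hint : ∀ᵐ ω ∂μ, IntervalIntegrable (h · ω) volume s T) (hW : Integrable W μ)
    (hgW : ∀ᵐ ω ∂μ, ∀ r ∈ Icc s T, |g r ω| * Real.exp (∫ u in s..T, |h u ω|) ≤ W ω) :
    Integrable (uncurry fun r ω => weightedDefect (h · ω) (g · ω) s T r)
      ((volume.restrict (Ioc s T)).prod μ) := by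
  have hmeas := aestronglyMeasurable_weightedDefect hh hg hgT
  have hbdd := ae_abs_le_div_exp hgW
  have hhg := ae_intervalIntegrable_mul hsT hg hint (hbdd.mono fun _ hω => ⟨_, hω⟩)
  refine (integrable_prod_iff' hmeas).2 ⟨?_, (hW.const_mul 3).mono'
    hmeas.norm.prod_swap.integral_prod_right' ?_⟩
  · filter_upwards [hint, hhg] with ω hhω hhgω
    exact (intervalIntegrable_iff_integrableOn_Ioc_of_le hsT).1
      (intervalIntegrable_weightedDefect hhω hhgω)
  · filter_upwards [hint, hhg, hbdd] with ω hhω hhgω hgω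
    rw [Real.norm_of_nonneg (integral_nonneg fun _ => norm_nonneg _)]
    have hle := integral_abs_weightedDefect_le hsT hhω hhgω hgω
    rwa [div_mul_cancel₀ _ (Real.exp_ne_zero _), intervalIntegral.integral_of_le hsT] at hle

lemma integrable_integral_mul [SFinite μ] (hsr : s ≤ r) (hrT : r ≤ T)
    (hh : AEStronglyMeasurable (uncurry h) ((volume.restrict (Ioc s T)).prod μ))
    (hg : AEStronglyMeasurable (uncurry g) ((volume.restrict (Ioc s T)).prod μ))
    (hint : ∀ᵐ ω ∂μ, IntervalIntegrable (h · ω) volume s T) (hW : Integrable W μ)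
    (hgW : ∀ᵐ ω ∂μ, ∀ r ∈ Icc s T, |g r ω| * Real.exp (∫ u in s..T, |h u ω|) ≤ W ω) :
    Integrable (fun ω => ∫ u in r..T, h u ω * g u ω) μ := by
  have hK : AEStronglyMeasurable (uncurry fun u ω => h u ω * g u ω)
      ((volume.restrict (Ioc r T)).prod μ) :=
    (hh.mul hg).mono_measure (Measure.prod_mono (Measure.restrict_mono
      (Ioc_subset_Ioc_left hsr) le_rfl) le_rfl)
  refine hW.mono' (aestronglyMeasurable_intervalIntegral hrT hK) ?_
  filter_upwards [hint, ae_abs_le_div_exp hgW, hgW] with ω hhω hgω hgWω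
  set A := ∫ u in s..T, |h u ω|
  have hW0 : 0 ≤ W ω := (by positivity : 0 ≤ |g T ω| * Real.exp A).trans
    (hgWω T ⟨hsr.trans hrT, le_rfl⟩)
  have hA : ∫ u in r..T, |h u ω| ≤ Real.exp A :=
    (intervalIntegral.integral_mono_interval hsr hrT le_rfl
      (Eventually.of_forall fun _ => abs_nonneg _) hhω.abs).trans
      ((le_add_of_nonneg_right zero_le_one).trans (Real.add_one_le_exp A))
  calc ‖∫ u in r..T, h u ω * g u ω‖
      ≤ W ω / Real.exp A * ∫ u in r..T, |h u ω| :=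
        abs_integral_mul_le hrT (hhω.mono_set (uIcc_subset_uIcc
          (Icc_subset_uIcc ⟨hsr, hrT⟩) right_mem_uIcc)) fun u hu => hgω u ⟨hsr.trans hu.1, hu.2⟩
    _ ≤ W ω / Real.exp A * Real.exp A := by gcongr
    _ = W ω := div_mul_cancel₀ _ (Real.exp_ne_zero _)

lemma condExp_weightedDefect_ae_eq_zero {ℱ : Filtration ℝ m0} [SigmaFiniteFiltration μ ℱ]
    (hh : IsStronglyProgressive ℱ h) (hsr : s ≤ r)
    (hint : Integrable (fun ω => g T ω - ∫ u in r..T, h u ω * g u ω) μ)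
    (hrec : g r =ᵐ[μ] μ[fun ω => g T ω - ∫ u in r..T, h u ω * g u ω | ℱ r])
    (hdefect : Integrable (fun ω => weightedDefect (h · ω) (g · ω) s T r) μ) :
    μ[fun ω => weightedDefect (h · ω) (g · ω) s T r | ℱ s] =ᵐ[μ] 0 := by
  have hD : StronglyMeasurable[ℱ r] fun ω => h r ω * Real.exp (-∫ u in s..r, h u ω) :=
    (hh.stronglyAdapted r).mul
      (Real.continuous_exp.comp_stronglyMeasurable
        (stronglyMeasurable_intervalIntegral_of_isStronglyProgressive hh hsr).neg)
  exact condExp_mul_sub_ae_eq_zero (ℱ.mono hsr) (ℱ.le r) hD hint hrec hdefect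

lemma ae_eq_condExp_mul_exp_neg_integral {ℱ : Filtration ℝ m0} [SigmaFiniteFiltration μ ℱ]
    (hsT : s ≤ T) (hprog : IsStronglyProgressive ℱ h)
    (hg : AEStronglyMeasurable (uncurry g) ((volume.restrict (Ioc s T)).prod μ))
    (hint : ∀ᵐ ω ∂μ, IntervalIntegrable (h · ω) volume s T) (hW : Integrable W μ)
    (hgW : ∀ᵐ ω ∂μ, ∀ r ∈ Icc s T, |g r ω| * Real.exp (∫ u in s..T, |h u ω|) ≤ W ω)
    (hrec : ∀ r ∈ Icc s T, g r =ᵐ[μ] μ[fun ω => g T ω - ∫ u in r..T, h u ω * g u ω | ℱ r]) :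
    g s =ᵐ[μ] μ[fun ω => g T ω * Real.exp (-∫ r in s..T, h r ω) | ℱ s] := by
  have : SigmaFinite μ := .of_trim (ℱ.le s)
  have hh : AEStronglyMeasurable (uncurry h) ((volume.restrict (Ioc s T)).prod μ) :=
    (stronglyMeasurable_uncurry_of_isStronglyProgressive hprog).aestronglyMeasurable
  have hgT : Integrable (g T) μ := integrable_condExp.congr (hrec T (right_mem_Icc.2 hsT)).symm
  have hΦ : ∀ r ∈ Icc s T, Integrable (fun ω => g T ω - ∫ u in r..T, h u ω * g u ω) μ :=
    fun r hr => hgT.sub (integrable_integral_mul hr.1 hr.2 hh hg hint hW hgW)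
  have hdefect := integrable_weightedDefect hsT hh hg hgT.aestronglyMeasurable hint hW hgW
  have hzero : μ[fun ω => ∫ r in Ioc s T, weightedDefect (h · ω) (g · ω) s T r | ℱ s] =ᵐ[μ] 0 := by
    refine condExp_integral_ae_eq_zero (ℱ.le s) hdefect ?_
    filter_upwards [hdefect.prod_right_ae, ae_restrict_mem measurableSet_Ioc] with r hr hrs
    obtain ⟨hsr, hrT⟩ := Ioc_subset_Icc_self hrs
    exact condExp_weightedDefect_ae_eq_zero hprog hsr (hΦ r ⟨hsr, hrT⟩) (hrec r ⟨hsr, hrT⟩) hr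
  have hpath : (fun ω => g T ω * Real.exp (-∫ r in s..T, h r ω)) =ᵐ[μ]
      (fun ω => g T ω - ∫ u in s..T, h u ω * g u ω) -
        fun ω => ∫ r in Ioc s T, weightedDefect (h · ω) (g · ω) s T r := by
    filter_upwards [hint, ae_intervalIntegrable_mul hsT hg hint
      ((ae_abs_le_div_exp hgW).mono fun _ hω => ⟨_, hω⟩)] with ω hhω hhgω
    rw [Pi.sub_apply, ← intervalIntegral.integral_of_le hsT, integral_weightedDefect hhω hhgω,
      sub_sub_cancel]
  have hs : s ∈ Icc s T := left_mem_Icc.2 hsT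
  calc g s
      =ᵐ[μ] μ[fun ω => g T ω - ∫ u in s..T, h u ω * g u ω | ℱ s] - 0 := by
        rw [sub_zero]
        exact hrec s hs
    _ =ᵐ[μ] _ := ((condExp_sub (hΦ s hs) hdefect.integral_prod_right (ℱ s)).trans
        (EventuallyEq.rfl.sub hzero)).symm
    _ =ᵐ[μ] _ := condExp_congr_ae hpath.symm

end DefectProcess

lemma intervalIntegrable_of_integrableOn_abs {f : ℝ → ℝ} {a b s : ℝ} (hs : s ∈ Icc a b)
    (hf : AEStronglyMeasurable f (volume.restrict (Icc a b)))
    (hint : IntegrableOn (fun r => |f r|) (Icc a b)) : IntervalIntegrable f volume s b := by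
  rw [intervalIntegrable_iff_integrableOn_Icc_of_le hs.2]
  exact IntegrableOn.mono_set ((integrable_norm_iff hf).1 hint) (Icc_subset_Icc_left hs.1)

theorem condexp_iteration_general {Ω : Type*} {m0 : MeasurableSpace Ω} {μ : Measure Ω}
    {ℱ : Filtration ℝ m0} [SigmaFiniteFiltration μ ℱ] {t₀ T : ℝ} {h g : ℝ → Ω → ℝ} {W : Ω → ℝ}
    (hprog : IsStronglyProgressive ℱ h)
    (hint : ∀ᵐ ω ∂μ, IntegrableOn (fun r => |h r ω|) (Icc t₀ T))
    (hg : AEStronglyMeasurable (uncurry g) ((volume.restrict (Icc t₀ T)).prod μ))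
    (hW : Integrable W μ)
    (hgW : ∀ᵐ ω ∂μ, ∀ r ∈ Icc t₀ T, |g r ω| * Real.exp (∫ u in t₀..T, |h u ω|) ≤ W ω)
    (hrec : ∀ s ∈ Icc t₀ T, g s =ᵐ[μ]
      μ[fun ω => g T ω - ∫ r in s..T, h r ω * g r ω | ℱ s]) :
    ∀ s ∈ Icc t₀ T, g s =ᵐ[μ]
      μ[fun ω => g T ω * Real.exp (-∫ r in s..T, h r ω) | ℱ s] := by
  intro s hs
  have : SigmaFinite μ := .of_trim (ℱ.le s)
  have hsub : Icc s T ⊆ Icc t₀ T := Icc_subset_Icc_left hs.1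
  have hhω : ∀ ω, StronglyMeasurable (h · ω) := fun ω =>
    (stronglyMeasurable_uncurry_of_isStronglyProgressive hprog).comp_measurable
      measurable_prodMk_right
  refine ae_eq_condExp_mul_exp_neg_integral hs.2 hprog ?_ ?_ hW ?_
    fun r hr => hrec r (hsub hr)
  · exact hg.mono_measure (Measure.prod_mono (Measure.restrict_mono
      (Ioc_subset_Icc_self.trans hsub) le_rfl) le_rfl)
  · exact hint.mono fun ω hω =>
      intervalIntegrable_of_integrableOn_abs hs (hhω ω).aestronglyMeasurable hω
  · filter_upwards [hgW, hint] with ω hgω hω r hr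
    have hle : ∫ u in s..T, |h u ω| ≤ ∫ u in t₀..T, |h u ω| :=
      intervalIntegral.integral_mono_interval hs.1 hs.2 le_rfl
        (Eventually.of_forall fun _ => abs_nonneg _)
        ((intervalIntegrable_iff_integrableOn_Icc_of_le (hs.1.trans hs.2)).2 hω)
    exact le_trans (by gcongr) (hgω r (hsub hr))

lemma le_iSup_abs_of_continuousOn {f : ℝ → ℝ} {a b r : ℝ} (hf : ContinuousOn f (Icc a b))
    (hr : r ∈ Icc a b) : |f r| ≤ ⨆ s : Icc a b, |f s| := by
  have hbdd := isCompact_Icc.bddAbove_image hf.abs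
  rw [image_eq_range] at hbdd
  exact le_ciSup hbdd ⟨r, hr⟩

/-- Iteration lemma: if a continuous adapted process `g` satisfies
`g_s = E[g_T − ∫_s^T h_r g_r dr | 𝓕_s]` for all `s ∈ [t₀, T]`, together with the stated
integrability, then `g_s = E[g_T · exp(−∫_s^T h_r dr) | 𝓕_s]` for all `s ∈ [t₀, T]`. -/
theorem condexp_iteration
    {Ω : Type*} {m0 : MeasurableSpace Ω} (μ : Measure Ω) [IsProbabilityMeasure μ]
    (ℱ : Filtration ℝ m0)
    (t₀ T : ℝ) (ht₀ : 0 ≤ t₀) (ht₀T : t₀ < T)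
    (h g : ℝ → Ω → ℝ)
    (hprog : ProgMeasurable ℱ h)
    (hint : ∀ᵐ ω ∂μ, IntegrableOn (fun r => |h r ω|) (Icc t₀ T))
    (hgadapt : Adapted ℱ g)
    (hgcont : ∀ᵐ ω ∂μ, ContinuousOn (fun s => g s ω) (Icc t₀ T))
    (hgint : Integrable (fun ω =>
      (⨆ s : Icc t₀ T, |g (s : ℝ) ω|) *
        Real.exp (∫ r in t₀..T, |h r ω|)) μ)
    (hrec : ∀ s ∈ Icc t₀ T, g s =ᵐ[μ]
      μ[fun ω => g T ω - ∫ r in s..T, h r ω * g r ω | ℱ s]) :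
    ∀ s ∈ Icc t₀ T, g s =ᵐ[μ]
      μ[fun ω => g T ω * Real.exp (-∫ r in s..T, h r ω) | ℱ s] :=
  condexp_iteration_general hprog hint
    (aestronglyMeasurable_uncurry_of_ae_continuousOn ht₀T.le
      (fun r => (hgadapt.stronglyAdapted r).mono (ℱ.le r)) hgcont)
    hgint (hgcont.mono fun _ hω _ hr =>
      mul_le_mul_of_nonneg_right (le_iSup_abs_of_continuousOn hω hr) (Real.exp_nonneg _)) hrec
end

section
/- Let (Ω, 𝓕, (𝓕_t)_{t≥0}, P) be a filtered probability space, let ξ ≥ 0 be an integrable random variable, and let (y_t)_{t≥0} be an adapted real-valued process with almost surely continuous paths such that for every t ≥ 0, |y_t| ≤ E[ξ | 𝓕_t] almost surely. Then for every β ∈ (0,1), E[ sup_{t≥0} |y_t|^β ] ≤ (1/(1−β)) · (E[ξ])^β. -/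
open MeasureTheory Set
open scoped MeasureTheory ENNReal

/-!
The process `y` is dominated by the martingale `M t = E[ξ | ℱ t]`, and by right-continuity of its
paths its supremum equals the supremum along a countable set of times, on which the domination holds
simultaneously almost surely. Doob's maximal inequality says that the supremum of `M` along a
countable set satisfies the weak-type bound `t * P(sup M > t) ≤ E[ξ]`. Kolmogorov's inequality turns
a weak-type bound with constant `C` into a bound on the moment of order `β < 1`: in the layer-cake
formula `E[f ^ β] = ∫₀^∞ β t ^ (β - 1) P(f > t) dt`, use `P(f > t) ≤ 1` below the level `t = C` and
`P(f > t) ≤ C / t` above it.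
-/

open Filter Topology

section Kolmogorov

lemma lintegral_Ioc_zero_rpow {a p : ℝ} (ha : 0 ≤ a) (hp : -1 < p) :
    ∫⁻ t in Ioc 0 a, ENNReal.ofReal (t ^ p) = ENNReal.ofReal (a ^ (p + 1) / (p + 1)) := by
  rw [← ofReal_integral_eq_lintegral_ofReal
      ((intervalIntegrable_iff_integrableOn_Ioc_of_le ha).1
        (intervalIntegral.intervalIntegrable_rpow' hp))
      ((ae_restrict_mem measurableSet_Ioc).mono fun t ht => Real.rpow_nonneg ht.1.le p),
    ← intervalIntegral.integral_of_le ha, integral_rpow (Or.inl hp),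
    Real.zero_rpow (by linarith), sub_zero]

lemma lintegral_Ioi_rpow {a p : ℝ} (ha : 0 < a) (hp : p < -1) :
    ∫⁻ t in Ioi a, ENNReal.ofReal (t ^ p) = ENNReal.ofReal (-a ^ (p + 1) / (p + 1)) := by
  rw [← ofReal_integral_eq_lintegral_ofReal (integrableOn_Ioi_rpow_of_lt hp ha)
      ((ae_restrict_mem measurableSet_Ioi).mono fun t ht =>
        Real.rpow_nonneg (ha.trans ht).le p),
    integral_Ioi_rpow_of_lt hp ha]

variable {β m C : ℝ} {G : ℝ → ℝ≥0∞}

lemma setLIntegral_Ioc_mul_rpow_le {a : ℝ} (ha : 0 ≤ a) (hβ : 0 < β)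
    (hm : ∀ t, 0 < t → G t ≤ ENNReal.ofReal m) :
    ∫⁻ t in Ioc 0 a, G t * ENNReal.ofReal (t ^ (β - 1)) ≤
      ENNReal.ofReal m * ENNReal.ofReal (a ^ β / β) :=
  calc ∫⁻ t in Ioc 0 a, G t * ENNReal.ofReal (t ^ (β - 1))
      ≤ ∫⁻ t in Ioc 0 a, ENNReal.ofReal m * ENNReal.ofReal (t ^ (β - 1)) :=
        setLIntegral_mono' measurableSet_Ioc fun t ht => by gcongr; exact hm t ht.1
    _ = ENNReal.ofReal m * ENNReal.ofReal (a ^ β / β) := by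
        rw [lintegral_const_mul' _ _ ENNReal.ofReal_ne_top,
          lintegral_Ioc_zero_rpow ha (by linarith), sub_add_cancel]

lemma setLIntegral_Ioi_mul_rpow_le {a : ℝ} (ha : 0 < a) (hβ : β < 1)
    (hC : ∀ t, 0 < t → G t ≤ ENNReal.ofReal (C / t)) :
    ∫⁻ t in Ioi a, G t * ENNReal.ofReal (t ^ (β - 1)) ≤
      ENNReal.ofReal C * ENNReal.ofReal (a ^ (β - 1) / (1 - β)) :=
  calc ∫⁻ t in Ioi a, G t * ENNReal.ofReal (t ^ (β - 1))
      ≤ ∫⁻ t in Ioi a, ENNReal.ofReal C * ENNReal.ofReal (t ^ (β - 2)) := by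
        refine setLIntegral_mono' measurableSet_Ioi fun t (hat : a < t) => ?_
        have ht : 0 < t := ha.trans hat
        have hpow : t ^ (β - 2) = t⁻¹ * t ^ (β - 1) := by
          rw [show β - 2 = -1 + (β - 1) by ring, Real.rpow_add ht, Real.rpow_neg_one]
        rw [hpow, ENNReal.ofReal_mul (by positivity), ← mul_assoc,
          ← ENNReal.ofReal_mul' (by positivity), ← div_eq_mul_inv]
        gcongr
        exact hC t ht
    _ = ENNReal.ofReal C * ENNReal.ofReal (a ^ (β - 1) / (1 - β)) := by
        rw [lintegral_const_mul' _ _ ENNReal.ofReal_ne_top, lintegral_Ioi_rpow ha (by linarith),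
          show β - 2 + 1 = β - 1 by ring, ← neg_sub 1 β, neg_div_neg_eq]

lemma lintegral_Ioi_zero_mul_rpow_le (hβ : β ∈ Ioo (0 : ℝ) 1) (hm0 : 0 ≤ m) (hC0 : 0 ≤ C)
    (hm : ∀ t, 0 < t → G t ≤ ENNReal.ofReal m)
    (hC : ∀ t, 0 < t → G t ≤ ENNReal.ofReal (C / t)) :
    ENNReal.ofReal β * ∫⁻ t in Ioi 0, G t * ENNReal.ofReal (t ^ (β - 1)) ≤
      ENNReal.ofReal (1 / (1 - β) * C ^ β * m ^ (1 - β)) := by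
  obtain ⟨hβ0, hβ1⟩ := hβ
  have : 0 < 1 - β := sub_pos.2 hβ1
  by_cases hdeg : m = 0 ∨ C = 0
  · have hG (t : ℝ) (ht : t ∈ Ioi 0) : G t * ENNReal.ofReal (t ^ (β - 1)) = 0 := by
      rcases hdeg with rfl | rfl
      · simpa using Or.inl (hm t ht)
      · simpa using Or.inl (hC t ht)
    simp [setLIntegral_congr_fun measurableSet_Ioi hG]
  obtain ⟨hm0', hC0'⟩ := not_or.1 hdeg
  replace hm0 : 0 < m := hm0.lt_of_ne' hm0'
  replace hC0 : 0 < C := hC0.lt_of_ne' hC0'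
  -- The two bounds on `G` coincide at this level.
  set a := C / m with ha_def
  have ha : 0 < a := div_pos hC0 hm0
  calc ENNReal.ofReal β * ∫⁻ t in Ioi 0, G t * ENNReal.ofReal (t ^ (β - 1))
      ≤ ENNReal.ofReal β * (ENNReal.ofReal m * ENNReal.ofReal (a ^ β / β) +
          ENNReal.ofReal C * ENNReal.ofReal (a ^ (β - 1) / (1 - β))) := by
        rw [← Ioc_union_Ioi_eq_Ioi ha.le,
          lintegral_union measurableSet_Ioi (Ioc_disjoint_Ioi le_rfl)]
        gcongr
        · exact setLIntegral_Ioc_mul_rpow_le ha.le hβ0 hm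
        · exact setLIntegral_Ioi_mul_rpow_le ha hβ1 hC
    _ = ENNReal.ofReal (β * (m * (a ^ β / β) + C * (a ^ (β - 1) / (1 - β)))) := by
        rw [← ENNReal.ofReal_mul hm0.le, ← ENNReal.ofReal_mul hC0.le,
          ← ENNReal.ofReal_add (by positivity) (by positivity), ← ENNReal.ofReal_mul hβ0.le]
    _ = ENNReal.ofReal (1 / (1 - β) * C ^ β * m ^ (1 - β)) := by
        congr 1
        rw [Real.rpow_sub_one ha.ne', Real.rpow_sub hm0, Real.rpow_one, ha_def,
          Real.div_rpow hC0.le hm0.le]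
        field_simp
        ring

variable {Ω : Type*} {m0 : MeasurableSpace Ω} {μ : Measure Ω} [IsFiniteMeasure μ] {f : Ω → ℝ≥0∞}

lemma ae_ne_top_of_mul_measureReal_lt_le
    (hC : ∀ t : ℝ, 0 < t → t * μ.real {ω | ENNReal.ofReal t < f ω} ≤ C) :
    ∀ᵐ ω ∂μ, f ω ≠ ∞ := by
  suffices h : μ.real {ω | f ω = ∞} = 0 by
    rw [ae_iff]
    simpa only [ne_eq, not_not] using (measureReal_eq_zero_iff).1 h
  by_contra hne
  have : 0 < μ.real {ω | f ω = ∞} := measureReal_nonneg.lt_of_ne' hne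
  have ht : 0 < (|C| + 1) / μ.real {ω | f ω = ∞} := by positivity
  have hmono : μ.real {ω | f ω = ∞} ≤
      μ.real {ω | ENNReal.ofReal ((|C| + 1) / μ.real {ω | f ω = ∞}) < f ω} :=
    measureReal_mono fun ω (hω : f ω = ∞) => hω ▸ ENNReal.ofReal_lt_top
  have hle : |C| + 1 ≤ C := by
    simpa only [div_mul_cancel₀ _ hne] using
      (mul_le_mul_of_nonneg_left hmono ht.le).trans (hC _ ht)
  linarith [le_abs_self C]

theorem lintegral_rpow_le_of_mul_measureReal_lt_le (hf : AEMeasurable f μ)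
    (hβ : β ∈ Ioo (0 : ℝ) 1)
    (hC : ∀ t : ℝ, 0 < t → t * μ.real {ω | ENNReal.ofReal t < f ω} ≤ C) :
    ∫⁻ ω, f ω ^ β ∂μ ≤ ENNReal.ofReal (1 / (1 - β) * C ^ β * μ.real univ ^ (1 - β)) := by
  have hC0 : 0 ≤ C := (by positivity : (0 : ℝ) ≤ _).trans (hC 1 one_pos)
  have hlt {t : ℝ} (ht : 0 < t) :
      {ω | t < (f ω).toReal} ⊆ {ω | ENNReal.ofReal t < f ω} := fun ω hω =>
    (ENNReal.ofReal_lt_iff_lt_toReal ht.le (ENNReal.toReal_pos_iff.1 (ht.trans hω)).2.ne).2 hω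
  calc ∫⁻ ω, f ω ^ β ∂μ = ∫⁻ ω, ENNReal.ofReal ((f ω).toReal ^ β) ∂μ := by
        refine lintegral_congr_ae ?_
        filter_upwards [ae_ne_top_of_mul_measureReal_lt_le hC] with ω hω
        rw [← ENNReal.ofReal_rpow_of_nonneg ENNReal.toReal_nonneg hβ.1.le,
          ENNReal.ofReal_toReal hω]
    _ = ENNReal.ofReal β *
          ∫⁻ t in Ioi 0, μ {ω | t < (f ω).toReal} * ENNReal.ofReal (t ^ (β - 1)) :=
        lintegral_rpow_eq_lintegral_meas_lt_mul μ (ae_of_all _ fun _ => ENNReal.toReal_nonneg)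
          hf.ennreal_toReal hβ.1
    _ ≤ ENNReal.ofReal (1 / (1 - β) * C ^ β * μ.real univ ^ (1 - β)) := by
        refine lintegral_Ioi_zero_mul_rpow_le hβ measureReal_nonneg hC0 (fun t _ => ?_)
          fun t ht => ?_
        · rw [ofReal_measureReal]
          exact measure_mono (subset_univ _)
        · rw [← ofReal_measureReal]
          refine ENNReal.ofReal_le_ofReal ((le_div_iff₀' ht).2 ?_)
          exact (mul_le_mul_of_nonneg_left (measureReal_mono (hlt ht)) ht.le).trans (hC t ht)

end Kolmogorov

section MaximalInequality

variable {Ω ι : Type*} [LinearOrder ι] {m0 : MeasurableSpace Ω} {μ : Measure Ω}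
  {ℱ : Filtration ι m0} {ξ : Ω → ℝ}

lemma measurableSet_le_condExp {s t : ι} (hst : s ≤ t) (c : ℝ) :
    MeasurableSet[ℱ t] {ω | c ≤ μ[ξ | ℱ s] ω} :=
  ℱ.mono hst _ (stronglyMeasurable_condExp.measurable measurableSet_Ici)

lemma setIntegral_le_integral_of_condExp_nonneg {m : MeasurableSpace Ω} (hm : m ≤ m0)
    [SigmaFinite (μ.trim hm)] (hξ : Integrable ξ μ) (hξ0 : 0 ≤ᵐ[μ] μ[ξ | m]) {A : Set Ω}
    (hA : MeasurableSet[m] A) :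
    ∫ ω in A, ξ ω ∂μ ≤ ∫ ω, ξ ω ∂μ := by
  rw [← setIntegral_condExp hm hξ hA, ← integral_condExp hm (f := ξ)]
  exact setIntegral_le_integral integrable_condExp hξ0

variable [IsFiniteMeasure μ]

lemma mul_measureReal_biUnion_le_condExp_le (hξ : Integrable ξ μ) (c : ℝ) (F : Finset ι) :
    c * μ.real (⋃ t ∈ F, {ω | c ≤ μ[ξ | ℱ t] ω}) ≤
      ∫ ω in ⋃ t ∈ F, {ω | c ≤ μ[ξ | ℱ t] ω}, ξ ω ∂μ := by
  induction F using Finset.induction_on_max with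
  | empty => simp
  | insert u F hu ih =>
    set A := ⋃ t ∈ F, {ω | c ≤ μ[ξ | ℱ t] ω}
    -- The event that `u` is the first time in `F ∪ {u}` at which the level `c` is reached.
    set B := {ω | c ≤ μ[ξ | ℱ u] ω} \ A
    have hB : MeasurableSet[ℱ u] B := (measurableSet_le_condExp le_rfl c).diff <|
      F.measurableSet_biUnion fun t ht => measurableSet_le_condExp (hu t ht).le c
    have hunion : ⋃ t ∈ insert u F, {ω | c ≤ μ[ξ | ℱ t] ω} = A ∪ B := by
      rw [Finset.set_biUnion_insert, union_sdiff_self, union_comm]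
    have hcB : c * μ.real B ≤ ∫ ω in B, ξ ω ∂μ := by
      rw [← setIntegral_condExp (ℱ.le u) hξ hB]
      exact setIntegral_ge_of_const_le_real (ℱ.le u _ hB) (measure_ne_top μ B)
        (fun ω hω => hω.1) integrable_condExp.integrableOn
    rw [hunion, measureReal_union disjoint_sdiff_right (ℱ.le u _ hB) (measure_ne_top μ A), mul_add,
      setIntegral_union disjoint_sdiff_right (ℱ.le u _ hB) hξ.integrableOn hξ.integrableOn]
    exact add_le_add ih hcB

variable {S : Set ι}

lemma mul_measureReal_countable_biUnion_le_condExp_le (hS : S.Countable) (hne : S.Nonempty)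
    (hξ : Integrable ξ μ) (hξ0 : ∀ t ∈ S, 0 ≤ᵐ[μ] μ[ξ | ℱ t]) (c : ℝ) :
    c * μ.real (⋃ t ∈ S, {ω | c ≤ μ[ξ | ℱ t] ω}) ≤ ∫ ω, ξ ω ∂μ := by
  have := hS.to_subtype
  have := hne.to_subtype
  have hfin (F : Finset S) :
      c * μ.real (⋃ t ∈ F, {ω | c ≤ μ[ξ | ℱ t] ω}) ≤ ∫ ω, ξ ω ∂μ := by
    obtain ⟨u, hu⟩ := F.exists_le
    have hmeas : MeasurableSet[ℱ u] (⋃ t ∈ F, {ω | c ≤ μ[ξ | ℱ t] ω}) :=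
      F.measurableSet_biUnion fun t ht =>
        measurableSet_le_condExp (Subtype.coe_le_coe.2 (hu t ht)) c
    refine le_trans ?_ (setIntegral_le_integral_of_condExp_nonneg (ℱ.le u) hξ (hξ0 u u.2) hmeas)
    simpa using mul_measureReal_biUnion_le_condExp_le hξ c (F.map (.subtype (· ∈ S)))
  have hmono : Monotone fun F : Finset S => ⋃ t ∈ F, {ω | c ≤ μ[ξ | ℱ t] ω} :=
    fun F F' hFF' => biUnion_subset_biUnion_left hFF'
  rw [biUnion_eq_iUnion, iUnion_eq_iUnion_finset]
  have hlim := (ENNReal.tendsto_toReal (measure_ne_top μ _)).comp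
    (tendsto_measure_iUnion_atTop hmono)
  exact le_of_tendsto' (hlim.const_mul c) hfin

lemma mul_measureReal_lt_biSup_condExp_le (hS : S.Countable) (hne : S.Nonempty)
    (hξ : Integrable ξ μ) (hξ0 : ∀ t ∈ S, 0 ≤ᵐ[μ] μ[ξ | ℱ t]) {c : ℝ} (hc : 0 ≤ c) :
    c * μ.real {ω | ENNReal.ofReal c < ⨆ t ∈ S, ENNReal.ofReal (μ[ξ | ℱ t] ω)} ≤
      ∫ ω, ξ ω ∂μ := by
  refine le_trans ?_ (mul_measureReal_countable_biUnion_le_condExp_le hS hne hξ hξ0 c)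
  gcongr
  · exact measure_ne_top _ _
  intro ω hω
  simp only [mem_ofPred_eq, lt_iSup_iff] at hω
  obtain ⟨t, ht, hlt⟩ := hω
  exact mem_biUnion ht ((ENNReal.ofReal_lt_ofReal_iff_of_nonneg hc).1 hlt).le

theorem lintegral_biSup_condExp_rpow_le (hS : S.Countable) (hne : S.Nonempty)
    (hξ : Integrable ξ μ) (hξ0 : ∀ t ∈ S, 0 ≤ᵐ[μ] μ[ξ | ℱ t]) {β : ℝ} (hβ : β ∈ Ioo (0 : ℝ) 1) :
    ∫⁻ ω, (⨆ t ∈ S, ENNReal.ofReal (μ[ξ | ℱ t] ω)) ^ β ∂μ ≤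
      ENNReal.ofReal (1 / (1 - β) * (∫ ω, ξ ω ∂μ) ^ β * μ.real univ ^ (1 - β)) :=
  lintegral_rpow_le_of_mul_measureReal_lt_le
    (.biSup S hS fun t _ =>
      (stronglyMeasurable_condExp.mono (ℱ.le t)).measurable.ennreal_ofReal.aemeasurable)
    hβ fun _ hc => mul_measureReal_lt_biSup_condExp_le hS hne hξ hξ0 hc.le

end MaximalInequality

section RightContinuous

variable {ι : Type*} [LinearOrder ι] [TopologicalSpace ι]

lemma exists_countable_subset_forall_mem_closure_inter_Ici [OrderTopology ι]
    [SecondCountableTopology ι] (T : Set ι) :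
    ∃ S ⊆ T, S.Countable ∧ ∀ t ∈ T, t ∈ closure (S ∩ Ici t) := by
  obtain ⟨D, hDT, hD, hTD⟩ : ∃ D ⊆ T, D.Countable ∧ T ⊆ closure D := by
    obtain ⟨D, hD, hdense⟩ := TopologicalSpace.exists_countable_dense T
    exact ⟨(↑) '' D, Subtype.coe_image_subset T D, hD.image _, fun t ht =>
      image_closure_subset_closure_image continuous_subtype_val ⟨⟨t, ht⟩, hdense _, rfl⟩⟩
  refine ⟨D ∪ {t ∈ T | 𝓝[T ∩ Ioi t] t = ⊥}, union_subset hDT (sep_subset _ _),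
    hD.union countable_setOfPred_isolated_right_within, fun t ht => ?_⟩
  by_cases hiso : 𝓝[T ∩ Ioi t] t = ⊥
  · exact subset_closure ⟨Or.inr ⟨ht, hiso⟩, le_rfl⟩
  rw [← ne_eq, ← neBot_iff, ← mem_closure_iff_nhdsWithin_neBot] at hiso
  have hsub : T ∩ Ioi t ⊆ closure (D ∩ Ioi t) :=
    fun s hs => isOpen_Ioi.closure_inter ⟨hTD hs.1, hs.2⟩
  exact closure_mono (inter_subset_inter subset_union_left Ioi_subset_Ici_self)
    (closure_minimal hsub isClosed_closure hiso)

lemma biSup_le_biSup_of_continuousWithinAt_Ici {α : Type*} [CompleteLattice α] [TopologicalSpace α]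
    [ClosedIicTopology α] {f : ι → α} {S T : Set ι} (hST : S ⊆ T)
    (hT : ∀ t ∈ T, t ∈ closure (S ∩ Ici t))
    (hf : ∀ t ∈ T, ContinuousWithinAt f (T ∩ Ici t) t) :
    ⨆ t ∈ T, f t ≤ ⨆ t ∈ S, f t := by
  refine iSup₂_le fun t ht => ?_
  have hmem : f t ∈ closure (f '' (S ∩ Ici t)) :=
    ((hf t ht).mono (inter_subset_inter_left _ hST)).mem_closure_image (hT t ht)
  refine closure_minimal ?_ isClosed_Iic hmem
  rintro _ ⟨s, hs, rfl⟩
  exact le_biSup f hs.1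

end RightContinuous

lemma ofReal_iSup_norm_le_iSup_enorm {ι E : Type*} [SeminormedAddCommGroup E] (f : ι → E) :
    ENNReal.ofReal (⨆ i, ‖f i‖) ≤ ⨆ i, ‖f i‖ₑ := by
  by_cases htop : ⨆ i, ‖f i‖ₑ = ∞
  · exact htop ▸ le_top
  · refine ENNReal.ofReal_le_of_le_toReal (Real.iSup_le (fun i => ?_) ENNReal.toReal_nonneg)
    rw [← toReal_enorm]
    exact ENNReal.toReal_mono htop (le_iSup (fun i => ‖f i‖ₑ) i)

lemma ofReal_iSup_norm_rpow_le_iSup_enorm_rpow {ι E : Type*} [SeminormedAddCommGroup E]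
    (f : ι → E) {p : ℝ} (hp : 0 ≤ p) :
    ENNReal.ofReal ((⨆ i, ‖f i‖) ^ p) ≤ (⨆ i, ‖f i‖ₑ) ^ p := by
  rw [← ENNReal.ofReal_rpow_of_nonneg (Real.iSup_nonneg fun i => norm_nonneg _) hp]
  exact ENNReal.rpow_le_rpow (ofReal_iSup_norm_le_iSup_enorm f) hp

theorem sup_power_estimate_general {Ω ι E : Type*} {m0 : MeasurableSpace Ω} {μ : Measure Ω}
    [IsFiniteMeasure μ] [LinearOrder ι] [TopologicalSpace ι] [OrderTopology ι]
    [SecondCountableTopology ι] [SeminormedAddCommGroup E] {ℱ : Filtration ι m0} {ξ : Ω → ℝ}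
    (hξ : Integrable ξ μ) {T : Set ι} {y : ι → Ω → E}
    (hcont : ∀ᵐ ω ∂μ, ∀ t ∈ T, ContinuousWithinAt (fun s => y s ω) (T ∩ Ici t) t)
    (hbound : ∀ t ∈ T, ∀ᵐ ω ∂μ, ‖y t ω‖ ≤ (μ[ξ | ℱ t]) ω) {β : ℝ} (hβ : β ∈ Ioo (0 : ℝ) 1) :
    ∫⁻ ω, (⨆ t ∈ T, ‖y t ω‖ₑ) ^ β ∂μ ≤
      ENNReal.ofReal (1 / (1 - β) * (∫ ω, ξ ω ∂μ) ^ β * μ.real univ ^ (1 - β)) := by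
  obtain rfl | ⟨t₀, ht₀⟩ := T.eq_empty_or_nonempty
  · simp [hβ.1]
  obtain ⟨S, hST, hS, hT⟩ := exists_countable_subset_forall_mem_closure_inter_Ici T
  have hne : S.Nonempty := (closure_nonempty_iff.1 ⟨t₀, hT t₀ ht₀⟩).left
  have hξ0 : ∀ t ∈ S, 0 ≤ᵐ[μ] μ[ξ | ℱ t] := fun t ht =>
    (hbound t (hST ht)).mono fun ω hω => (norm_nonneg _).trans hω
  have hsup : ∀ᵐ ω ∂μ, ⨆ t ∈ T, ‖y t ω‖ₑ ≤ ⨆ t ∈ S, ENNReal.ofReal (μ[ξ | ℱ t] ω) := by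
    filter_upwards [hcont, (ae_ball_iff hS).2 fun t ht => hbound t (hST ht)] with ω hcontω hboundω
    refine (biSup_le_biSup_of_continuousWithinAt_Ici hST hT fun t ht =>
      (hcontω t ht).enorm).trans (iSup₂_mono fun t ht => ?_)
    rw [← ofReal_norm]
    exact ENNReal.ofReal_le_ofReal (hboundω t ht)
  refine le_trans (lintegral_mono_ae ?_) (lintegral_biSup_condExp_rpow_le hS hne hξ hξ0 hβ)
  exact hsup.mono fun ω hω => ENNReal.rpow_le_rpow hω hβ.1.le

/-- Doob-type estimate: if `|y_t| ≤ E[ξ | 𝓕_t]` a.s. for every `t ≥ 0`, with `ξ ≥ 0`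
integrable and `y` adapted with a.s. continuous paths, then for every `β ∈ (0,1)`,
`E[sup_{t ≥ 0} |y_t|^β] ≤ (1/(1−β))·(E[ξ])^β`. -/
theorem sup_power_estimate
    {Ω : Type*} {m0 : MeasurableSpace Ω} (μ : Measure Ω) [IsProbabilityMeasure μ]
    (ℱ : Filtration ℝ m0)
    (ξ : Ω → ℝ) (hξ0 : ∀ ω, 0 ≤ ξ ω) (hξint : Integrable ξ μ)
    (y : ℝ → Ω → ℝ) (hadapt : Adapted ℱ y)
    (hcont : ∀ᵐ ω ∂μ, ContinuousOn (fun t => y t ω) (Ici (0 : ℝ)))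
    (hbound : ∀ t : ℝ, 0 ≤ t → ∀ᵐ ω ∂μ, |y t ω| ≤ (μ[ξ | ℱ t]) ω)
    (β : ℝ) (hβ : β ∈ Ioo (0 : ℝ) 1) :
    ∫⁻ ω, ENNReal.ofReal ((⨆ t : Ici (0 : ℝ), |y (t : ℝ) ω|) ^ β) ∂μ ≤
      ENNReal.ofReal ((1 / (1 - β)) * (∫ ω, ξ ω ∂μ) ^ β) := by
  have hright : ∀ᵐ ω ∂μ, ∀ t ∈ Ici (0 : ℝ),
      ContinuousWithinAt (fun s => y s ω) (Ici 0 ∩ Ici t) t :=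
    hcont.mono fun ω hω t ht => (hω t ht).mono inter_subset_left
  calc ∫⁻ ω, ENNReal.ofReal ((⨆ t : Ici (0 : ℝ), |y (t : ℝ) ω|) ^ β) ∂μ
      ≤ ∫⁻ ω, (⨆ t : Ici (0 : ℝ), ‖y t ω‖ₑ) ^ β ∂μ :=
        lintegral_mono fun ω => ofReal_iSup_norm_rpow_le_iSup_enorm_rpow _ hβ.1.le
    _ ≤ ENNReal.ofReal ((1 / (1 - β)) * (∫ ω, ξ ω ∂μ) ^ β) := by
        simpa [iSup_subtype] using sup_power_estimate_general hξint hright hbound hβ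
end
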